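/- Let a be a ribbon with n ≥ 4 nodes, all of which are positive. Then every extension of a has at least δ(a) critical points in the open unit disk; that is, γ(a) ≥ δ(a). -/

import Mathlib

open scoped RealInnerProductSpace

noncomputable section

abbrev E2 : Type := EuclideanSpace ℝ (Fin 2)

/-- The point (cos t, sin t) on the unit circle in ℝ². -/
def sphPt (t : ℝ) : E2 := (EuclideanSpace.equiv (Fin 2) ℝ).symm ![Real.cos t, Real.sin t]

/-- A ribbon with `n` nodes, encoded via the angle parametrization `g = φ ∘ (cos, sin)`
of a C^∞ function `φ : S¹ → ℝ` whose critical points on the circle are exactly the `n`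
nondegenerate local extrema (nodes) at angles `θ 0 < θ 1 < ⋯ < θ (n-1)` in `[0, 2π)`,
with pairwise distinct critical values, together with a marking `ν` of the nodes by `±1`. -/
structure Ribbon (n : ℕ) : Type where
  g : ℝ → ℝ
  θ : Fin n → ℝ
  ν : Fin n → ℤ
  n_even : Even n
  n_pos : 0 < n
  smooth_g : ContDiff ℝ (⊤ : ℕ∞) g
  periodic_g : Function.Periodic g (2 * Real.pi)
  theta_mem : ∀ i, θ i ∈ Set.Ico (0 : ℝ) (2 * Real.pi)
  theta_mono : StrictMono θ
  node_crit : ∀ i, deriv g (θ i) = 0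
  node_nondeg : ∀ i, deriv (deriv g) (θ i) ≠ 0
  crit_only : ∀ t ∈ Set.Ico (0 : ℝ) (2 * Real.pi), deriv g t = 0 → ∃ i, t = θ i
  values_distinct : ∀ i j, g (θ i) = g (θ j) → i = j
  nu_sign : ∀ i, ν i = 1 ∨ ν i = -1

/-- The signature σ = s₊ − s₋ of a ribbon. -/
def Ribbon.sigma {n : ℕ} (a : Ribbon n) : ℤ := ∑ i, a.ν i

/-- Critical points of `f` in the open unit disk. -/
def critPts (f : E2 → ℝ) : Set E2 :=
  {x | x ∈ Metric.ball (0 : E2) 1 ∧ fderiv ℝ f x = 0}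

/-- `f : ℝ² → ℝ` is an extension of the ribbon `a`: it is C^∞, agrees with `φ` on the unit
circle, has nowhere-vanishing gradient on the circle, and at each node the radial derivative
`⟪∇f(p), p⟫` has sign `ν p` if `p` is a local maximum of `φ` (second derivative of `g`
negative there) and sign `−ν p` if `p` is a local minimum of `φ`. -/
def IsExtension {n : ℕ} (a : Ribbon n) (f : E2 → ℝ) : Prop :=
  ContDiff ℝ (⊤ : ℕ∞) f ∧
  (∀ t : ℝ, f (sphPt t) = a.g t) ∧
  (∀ x ∈ Metric.sphere (0 : E2) 1, fderiv ℝ f x ≠ 0) ∧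
  (∀ i : Fin n,
    (deriv (deriv a.g) (a.θ i) < 0 →
      0 < (a.ν i : ℝ) * ⟪gradient f (sphPt (a.θ i)), sphPt (a.θ i)⟫) ∧
    (0 < deriv (deriv a.g) (a.θ i) →
      (a.ν i : ℝ) * ⟪gradient f (sphPt (a.θ i)), sphPt (a.θ i)⟫ < 0))

/-- The ribbon invariant γ: the infimum, over all extensions `f` of `a`, of the number of
critical points of `f` in the open unit disk (a value in `ℕ∞`). -/
def gammaR {n : ℕ} (a : Ribbon n) : ℕ∞ :=
  sInf {k : ℕ∞ | ∃ f : E2 → ℝ, IsExtension a f ∧ (critPts f).encard = k}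

/-- The cyclically next node index. -/
def Ribbon.next {n : ℕ} (a : Ribbon n) (i : Fin n) : Fin n :=
  ⟨((i : ℕ) + 1) % n, Nat.mod_lt _ a.n_pos⟩

/-- The cluster number δ(a): the least cardinality of a finite subset of ℝ meeting, for
every `i`, the closed interval with endpoints `l i = φ (p i)` and `l (i+1)` (cyclically). -/
def clusterNumber {n : ℕ} (a : Ribbon n) : ℕ :=
  sInf {k : ℕ | ∃ A : Finset ℝ, A.card = k ∧
    ∀ i : Fin n, ∃ x ∈ A, x ∈ Set.uIcc (a.g (a.θ i)) (a.g (a.θ (a.next i)))}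

lemma nested_conn {K : ℝ → Set E2} {d : ℝ} (hmono : Monotone K) (hcpt : ∀ c, IsCompact (K c))
    (hconn : ∀ c, d < c → IsPreconnected (K c)) : IsPreconnected (⋂ c : Set.Ioi d, K c) := by
  have hcl : IsClosed (⋂ c : Set.Ioi d, K c) := isClosed_iInter fun c => (hcpt c).isClosed
  have hne : Nonempty (Set.Ioi d) := ⟨⟨d + 1, by simp⟩⟩
  rw [isPreconnected_iff_subset_of_fully_disjoint_closed hcl]
  intro u v hu hv hcov hdis
  set I := ⋂ c : Set.Ioi d, K c with hI
  have hIc : IsCompact I := (hcpt (d + 1)).of_isClosed_subset hcl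
    (Set.iInter_subset (fun c : Set.Ioi d => K c) ⟨d + 1, by simp⟩)
  obtain ⟨O1, O2, h1, h2, hs1, hs2, hd12⟩ := SeparatedNhds.of_isCompact_isCompact
    (hIc.inter_right hu) (hIc.inter_right hv)
    (hdis.mono Set.inter_subset_right Set.inter_subset_right)
  have hdir : Directed (· ⊇ ·) (fun c : Set.Ioi d => K c) := by
    intro a b
    rcases le_total (a : ℝ) b with h | h
    · exact ⟨a, le_rfl, hmono h⟩
    · exact ⟨b, hmono h, le_rfl⟩
  have hIsub : I ⊆ O1 ∪ O2 := by
    intro x hx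
    rcases hcov hx with h | h
    · exact Or.inl (hs1 ⟨hx, h⟩)
    · exact Or.inr (hs2 ⟨hx, h⟩)
  obtain ⟨c, hc⟩ := exists_subset_nhds_of_isCompact hdir (fun c => hcpt c)
    (U := O1 ∪ O2) (fun x hx => (h1.union h2).mem_nhds (hIsub hx))
  have hIK : I ⊆ K c := Set.iInter_subset (fun c : Set.Ioi d => K c) c
  have := isPreconnected_iff_subset_of_disjoint.1 (hconn c c.2) O1 O2 h1 h2 hc
    (by rw [hd12.inter_eq, Set.inter_empty])
  rcases this with h | h
  · left
    intro x hx
    rcases hcov hx with h' | h'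
    · exact h'
    · exact absurd (hs2 ⟨hx, h'⟩) (Set.disjoint_left.1 hd12 (h (hIK hx)))
  · right
    intro x hx
    rcases hcov hx with h' | h'
    · exact absurd (h (hIK hx)) (Set.disjoint_left.1 hd12 (hs1 ⟨hx, h'⟩))
    · exact h'

/-- strict local minimum relative to the closed disk -/
def SLM (f : E2 → ℝ) (x : E2) : Prop :=
  ∃ ε > 0, ∀ y ∈ Metric.closedBall (0 : E2) 1, dist y x < ε → y ≠ x → f x < f y

lemma inward (x v : E2) (hx : x ∈ Metric.closedBall (0 : E2) 1) (hv : ‖x‖ = 1 → ⟪v, x⟫ < 0) :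
    ∃ r > 0, ∃ t₁ > (0 : ℝ), ∀ y ∈ Metric.closedBall (0 : E2) 1, dist y x < r → ∀ t ∈ Set.Icc (0 : ℝ) t₁,
      y + t • v ∈ Metric.closedBall (0 : E2) 1 := by
  have hx1 : ‖x‖ ≤ 1 := by simpa using hx
  rcases hx1.lt_or_eq with h | h
  · refine ⟨(1 - ‖x‖) / 2, by linarith, (1 - ‖x‖) / 2 / (‖v‖ + 1), by
      have := norm_nonneg v
      apply div_pos <;> linarith, ?_⟩
    intro y _ hyx t ht
    have hv0 := norm_nonneg v
    have h1 : ‖y‖ ≤ ‖x‖ + dist y x := by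
      rw [dist_eq_norm]; have := norm_add_le x (y - x); simpa using this
    have h2 : t * (‖v‖ + 1) ≤ (1 - ‖x‖) / 2 := by
      have := ht.2
      rwa [le_div_iff₀ (by linarith)] at this
    have h3 : ‖y + t • v‖ ≤ ‖y‖ + t * ‖v‖ := by
      have := norm_add_le y (t • v)
      rwa [norm_smul, Real.norm_of_nonneg ht.1] at this
    have := ht.1
    rw [mem_closedBall_zero_iff]
    nlinarith
  · have hη := hv h
    set η := -⟪v, x⟫ with hηd
    have hc : Continuous fun y : E2 => ⟪v, y⟫ := by fun_prop
    obtain ⟨r, hr, hball⟩ := Metric.eventually_nhds_iff.1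
      (hc.continuousAt.eventually (gt_mem_nhds (show ⟪v, x⟫ < -(η / 2) by linarith)))
    have hv0 := norm_nonneg v
    refine ⟨r, hr, η / (‖v‖ ^ 2 + 1), by apply div_pos <;> nlinarith, ?_⟩
    intro y hy hyx t ht
    have h1 := hball hyx
    have h2 : t * (‖v‖ ^ 2 + 1) ≤ η := by
      have := ht.2
      rwa [le_div_iff₀ (by nlinarith)] at this
    have hy1 : ‖y‖ ≤ 1 := by simpa using hy
    have h3 : ‖y + t • v‖ ^ 2 = ‖y‖ ^ 2 + 2 * (t * ⟪v, y⟫) + t ^ 2 * ‖v‖ ^ 2 := by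
      rw [norm_add_sq_real, norm_smul, inner_smul_right, real_inner_comm, mul_pow]
      simp
    have ht0 := ht.1
    rw [mem_closedBall_zero_iff]
    have h4 : ‖y + t • v‖ ^ 2 ≤ 1 := by
      rw [h3]
      have : ‖y‖ ^ 2 ≤ 1 := by nlinarith [norm_nonneg y]
      have h5 : t * ⟪v, y⟫ ≤ t * (-(η / 2)) := mul_le_mul_of_nonneg_left h1.le ht0
      have h6 : t * (t * (‖v‖ ^ 2 + 1)) ≤ t * η := mul_le_mul_of_nonneg_left h2 ht0
      nlinarith [sq_nonneg t]
    nlinarith [norm_nonneg (y + t • v)]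

lemma line_anti (f : E2 → ℝ) (hf : ContDiff ℝ 1 f) (y v : E2) (s : Set ℝ) (hs : Convex ℝ s)
    (h : ∀ t ∈ s, fderiv ℝ f (y + t • v) v < 0) :
    StrictAntiOn (fun t : ℝ => f (y + t • v)) s := by
  have hd : ∀ t : ℝ, HasDerivAt (fun t : ℝ => f (y + t • v)) (fderiv ℝ f (y + t • v) v) t := by
    intro t
    have h1 : HasDerivAt (fun t : ℝ => y + t • v) v t := by
      simpa using ((hasDerivAt_id t).smul_const v).const_add y
    exact ((hf.differentiable one_ne_zero) _).hasFDerivAt.comp_hasDerivAt t h1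
  apply strictAntiOn_of_deriv_neg hs
  · exact fun t _ => (hd t).continuousAt.continuousWithinAt
  · intro t ht
    rw [(hd t).deriv]
    exact h t (interior_subset ht)

lemma local_step (f : E2 → ℝ) (hf : ContDiff ℝ 1 f) (x v : E2)
    (hx : x ∈ Metric.closedBall (0 : E2) 1) (hv : ‖x‖ = 1 → ⟪v, x⟫ < 0)
    (hfv : fderiv ℝ f x v < 0) :
    ∃ ρ > 0, ∃ t₀ > (0 : ℝ), ∀ y ∈ Metric.closedBall (0 : E2) 1, dist y x < ρ → f y ≤ f x →
      ∀ z ∈ Metric.closedBall (0 : E2) 1, dist z x < ρ → f z < f x →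
      ∀ t ∈ Set.Ioc 0 t₀, ∃ c < f x, ∃ S ⊆ Metric.closedBall (0 : E2) 1, IsPreconnected S ∧
        z ∈ S ∧ y + t • v ∈ S ∧ ∀ s ∈ S, f s ≤ c := by
  obtain ⟨r₁, hr₁, t₁, ht₁, hin⟩ := inward x v hx hv
  have hc : Continuous fun y : E2 => fderiv ℝ f y v :=
    (hf.continuous_fderiv one_ne_zero).clm_apply continuous_const
  obtain ⟨r₂, hr₂, hneg⟩ := Metric.eventually_nhds_iff.1
      (hc.continuousAt.eventually (gt_mem_nhds hfv))
  set r := min r₁ r₂ with hr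
  have hrp : 0 < r := lt_min hr₁ hr₂
  have hv0 := norm_nonneg v
  set t₀ := min t₁ (r / 2 / (‖v‖ + 1)) with ht₀
  have ht₀p : 0 < t₀ := lt_min ht₁ (div_pos (by linarith) (by linarith))
  have hnear : ∀ y, dist y x < r / 2 → ∀ t ∈ Set.Icc 0 t₀, dist (y + t • v) x < r := by
    intro y hy t ht
    have h2 : t * (‖v‖ + 1) ≤ r / 2 := by
      have := ht.2.trans (min_le_right _ _)
      rwa [le_div_iff₀ (by linarith)] at this
    have h3 : dist (y + t • v) x ≤ dist y x + t * ‖v‖ := by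
      have : dist (y + t • v) y = t * ‖v‖ := by
        rw [dist_eq_norm, add_sub_cancel_left, norm_smul, Real.norm_of_nonneg ht.1]
      have := dist_triangle (y + t • v) y x
      linarith
    have := ht.1
    nlinarith
  have hanti : ∀ y, dist y x < r / 2 → StrictAntiOn (fun t : ℝ => f (y + t • v)) (Set.Icc 0 t₀) :=
    fun y hy => line_anti f hf y v _ (convex_Icc _ _)
      fun t ht => hneg ((hnear y hy t ht).trans_le (min_le_right _ _))
  have hm0 : (0 : ℝ) ∈ Set.Icc 0 t₀ := ⟨le_rfl, ht₀p.le⟩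
  have hmt : t₀ ∈ Set.Icc 0 t₀ := ⟨ht₀p.le, le_rfl⟩
  have hlow : f (x + t₀ • v) < f x := by
    have := hanti x (by simpa using hrp) hm0 hmt ht₀p
    simpa using this
  obtain ⟨e, he1, he2⟩ := exists_between hlow
  obtain ⟨r₃, hr₃, hball⟩ := Metric.eventually_nhds_iff.1
      (hf.continuous.continuousAt.eventually (gt_mem_nhds he1))
  refine ⟨min (r / 2) r₃, lt_min (by linarith) hr₃, t₀, ht₀p, ?_⟩
  intro y hy hyx hfy z hz hzx hfz t ht
  have hyr := hyx.trans_le (min_le_left _ _)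
  have hzr := hzx.trans_le (min_le_left _ _)
  have hy3 := hyx.trans_le (min_le_right _ _)
  have hz3 := hzx.trans_le (min_le_right _ _)
  have hD : ∀ y ∈ Metric.closedBall (0 : E2) 1, dist y x < r / 2 → ∀ t ∈ Set.Icc 0 t₀,
      y + t • v ∈ Metric.closedBall (0 : E2) 1 := fun y hy hyr t ht =>
    hin y hy (by have := min_le_left r₁ r₂; linarith) t ⟨ht.1, ht.2.trans (min_le_left _ _)⟩
  have htm : t ∈ Set.Icc 0 t₀ := ⟨ht.1.le, ht.2⟩
  have hfyt : f (y + t • v) < f x := by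
    have := hanti y hyr hm0 htm ht.1
    simp at this
    linarith
  set B := Metric.closedBall (0 : E2) 1 ∩ Metric.ball (x + t₀ • v) r₃ with hB
  set S1 := (fun s : ℝ => z + s • v) '' Set.Icc 0 t₀
  set S2 := (fun s : ℝ => y + s • v) '' Set.Icc t t₀
  have hzB : z + t₀ • v ∈ B := ⟨hD z hz hzr _ hmt, by simpa using hz3⟩
  have hyB : y + t₀ • v ∈ B := ⟨hD y hy hyr _ hmt, by simpa using hy3⟩
  have hz1 : z + t₀ • v ∈ S1 := ⟨t₀, hmt, rfl⟩
  have hy2 : y + t₀ • v ∈ S2 := ⟨t₀, ⟨ht.2, le_rfl⟩, rfl⟩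
  refine ⟨max (f z) (max e (f (y + t • v))), max_lt hfz (max_lt he2 hfyt), (S1 ∪ B) ∪ S2,
    ?_, ?_, ?_, ?_, ?_⟩
  · rintro w ((⟨s, hs, rfl⟩ | hw) | ⟨s, hs, rfl⟩)
    · exact hD z hz hzr s hs
    · exact hw.1
    · exact hD y hy hyr s ⟨ht.1.le.trans hs.1, hs.2⟩
  · have c1 : IsPreconnected S1 := isPreconnected_Icc.image _ (by fun_prop)
    have c2 : IsPreconnected S2 := isPreconnected_Icc.image _ (by fun_prop)
    have c3 : IsPreconnected B :=
      ((convex_closedBall _ _).inter (convex_ball _ _)).isPreconnected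
    exact IsPreconnected.union _ (Or.inr hyB) hy2 (c1.union _ hz1 hzB c3) c2
  · exact Or.inl (Or.inl ⟨0, hm0, by simp⟩)
  · exact Or.inr ⟨t, ⟨le_rfl, ht.2⟩, rfl⟩
  · rintro w ((⟨s, hs, rfl⟩ | hw) | ⟨s, hs, rfl⟩)
    · refine le_max_of_le_left ?_
      have := (hanti z hzr).antitoneOn hm0 hs hs.1
      simpa using this
    · exact le_max_of_le_right (le_max_of_le_left (hball hw.2).le)
    · refine le_max_of_le_right (le_max_of_le_right ?_)
      exact (hanti y hyr).antitoneOn htm ⟨ht.1.le.trans hs.1, hs.2⟩ hs.1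

lemma core (f : E2 → ℝ) (hf : ContDiff ℝ 1 f) (p q : E2) (hpq : p ≠ q) (C : Set E2)
    (hC : IsPreconnected C) (hpC : p ∈ C) (hqC : q ∈ C) (hCD : C ⊆ Metric.closedBall (0 : E2) 1)
    (m : ℝ) (hCm : ∀ x ∈ C, f x ≤ m) (hp : SLM f p) (hq : SLM f q)
    (hreg : ∀ x ∈ Metric.closedBall (0 : E2) 1, f p ≤ f x → f x ≤ m → SLM f x ∨
      ∃ v, fderiv ℝ f x v < 0 ∧ (‖x‖ = 1 → ⟪v, x⟫ < 0)) : False := by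
  set D := Metric.closedBall (0 : E2) 1 with hD
  have hfc := hf.continuous
  have hpD : p ∈ D := hCD hpC
  have hqD : q ∈ D := hCD hqC
  set Q : ℝ → Set E2 := fun c => D ∩ {x | f x ≤ c} with hQ
  have hQcl : ∀ c, IsClosed (Q c) := fun c =>
    Metric.isClosed_closedBall.inter (isClosed_le hfc continuous_const)
  have hQmono : Monotone Q := fun c c' h x hx => ⟨hx.1, le_trans hx.2 h⟩
  set K : ℝ → Set E2 := fun c => connectedComponentIn (Q c) p with hK
  have hKQ : ∀ c, K c ⊆ Q c := fun c => connectedComponentIn_subset _ _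
  have hKconn : ∀ c, IsPreconnected (K c) := fun c => isPreconnected_connectedComponentIn
  have hKmono : Monotone K := fun c c' h => connectedComponentIn_mono p (hQmono h)
  have hpK : ∀ c, f p ≤ c → p ∈ K c := fun c hc => mem_connectedComponentIn ⟨hpD, hc⟩
  have hKp : ∀ c, ∀ x ∈ K c, f p ≤ c := fun c x hx => by
    have : p ∈ Q c := connectedComponentIn_nonempty_iff.1 ⟨x, hx⟩
    exact this.2
  have hKmax : ∀ c S, IsPreconnected S → S ⊆ Q c → ∀ z ∈ S, z ∈ K c → S ⊆ K c := by
    intro c S hS hSQ z hzS hzK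
    have h1 : IsPreconnected (K c ∪ S) := (hKconn c).union z hzK hzS hS
    have h2 : p ∈ K c := hpK c (hKp c z hzK)
    exact Set.subset_union_right.trans (h1.subset_connectedComponentIn (Or.inl h2)
      (Set.union_subset (hKQ c) hSQ))
  have hKcl : ∀ c, IsClosed (K c) := by
    intro c
    rcases (K c).eq_empty_or_nonempty with h | ⟨z, hz⟩
    · rw [h]; exact isClosed_empty
    · apply isClosed_of_closure_subset
      exact hKmax c _ (hKconn c).closure ((hQcl c).closure_subset_iff.2 (hKQ c)) z
        (subset_closure hz) hz
  have hKcpt : ∀ c, IsCompact (K c) := fun c =>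
    (isCompact_closedBall (0 : E2) 1).of_isClosed_subset (hKcl c) fun x hx => (hKQ c hx).1
  set T : Set ℝ := {c | q ∈ K c} with hT
  have hmT : m ∈ T := hC.subset_connectedComponentIn (F := Q m) hpC (fun x hx => ⟨hCD hx, hCm x hx⟩) hqC
  have hTb : ∀ c ∈ T, f p ≤ c := fun c hc => hKp c q hc
  have hTbdd : BddBelow T := ⟨f p, hTb⟩
  set d := sInf T with hd
  have hdm : d ≤ m := csInf_le hTbdd hmT
  have hpd : f p ≤ d := le_csInf ⟨m, hmT⟩ hTb
  have hup : ∀ c, d < c → q ∈ K c := by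
    intro c hc
    obtain ⟨c', hc', hlt⟩ := exists_lt_of_csInf_lt ⟨m, hmT⟩ hc
    exact hKmono hlt.le hc'
  have hqd : q ∈ K d := by
    have h1 := nested_conn (d := d) hKmono hKcpt fun c _ => hKconn c
    refine h1.subset_connectedComponentIn (x := p) (F := Q d) ?_ ?_ ?_
    · exact Set.mem_iInter.2 fun c => hpK c (hpd.trans (le_of_lt c.2))
    · intro x hx
      rw [Set.mem_iInter] at hx
      refine ⟨(hKQ _ (hx ⟨d + 1, by simp⟩)).1, ?_⟩
      exact le_of_forall_gt_imp_ge_of_dense fun c hc => (hKQ _ (hx ⟨c, hc⟩)).2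
    · exact Set.mem_iInter.2 fun c => hup c c.2
  have hlt : f p < d := by
    rcases hpd.lt_or_eq with h | h
    · exact h
    exfalso
    obtain ⟨ε, hε, hmin⟩ := hp
    have hiso : ∀ y ∈ K d, y ∈ Metric.ball p ε → y = p := by
      intro y hy hyb
      by_contra hne
      have h1 := hmin y (hKQ _ hy).1 hyb hne
      have h2 : f y ≤ d := (hKQ _ hy).2
      linarith
    rcases isPreconnected_iff_subset_of_disjoint.1 (hKconn d) (Metric.ball p ε) {p}ᶜ
      Metric.isOpen_ball isOpen_compl_singleton (by
        intro x _
        by_cases hxp : x = p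
        · exact Or.inl (hxp ▸ Metric.mem_ball_self hε)
        · exact Or.inr hxp) (by
        rw [Set.eq_empty_iff_forall_notMem]
        rintro y ⟨hy, hyb, hyp⟩
        exact hyp (hiso y hy hyb)) with h1 | h1
    · exact hpq (hiso q hqd (h1 hqd)).symm
    · exact h1 (hpK d hpd) rfl
  set U : Set E2 := {x | ∃ c < d, x ∈ K c} with hU
  have hUsub : ∀ x ∈ U, x ∈ D ∧ f x < d := by
    rintro x ⟨c, hc, hx⟩
    exact ⟨(hKQ c hx).1, (hKQ c hx).2.trans_lt hc⟩
  have hUext : ∀ c < d, ∀ S ⊆ D, IsPreconnected S → (∀ s ∈ S, f s ≤ c) → ∀ z ∈ S, z ∈ U → S ⊆ U := by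
    rintro c hc S hSD hS hSc z hzS ⟨c', hc', hz⟩ s hs
    refine ⟨max c c', max_lt hc hc', hKmax _ S hS ?_ z hzS (hKmono (le_max_right _ _) hz) hs⟩
    exact fun y hy => ⟨hSD hy, (hSc y hy).trans (le_max_left _ _)⟩
  -- near a point below level d
  have hbelow : ∀ x ∈ D, f x < d → ∃ ρ > 0, ∀ y ∈ D, dist y x < ρ → ∀ z ∈ U, dist z x < ρ →
      y ∈ U := by
    intro x hx hfx
    obtain ⟨e, he1, he2⟩ := exists_between hfx
    obtain ⟨r, hr, hball⟩ := Metric.eventually_nhds_iff.1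
      (hfc.continuousAt.eventually (gt_mem_nhds he1))
    refine ⟨r, hr, fun y hy hyx z hz hzx => ?_⟩
    exact hUext e he2 (D ∩ Metric.ball x r) Set.inter_subset_left
      ((convex_closedBall _ _).inter (convex_ball _ _)).isPreconnected
      (fun s hs => (hball hs.2).le) z ⟨(hUsub z hz).1, hzx⟩ hz ⟨hy, hyx⟩
  have hopen : ∀ x ∈ K d ∩ closure U, ∃ ρ > 0, ∀ y ∈ K d, dist y x < ρ → y ∈ closure U := by
    rintro x ⟨hxK, hxU⟩
    have hxD := (hKQ _ hxK).1
    have hxd : f x ≤ d := (hKQ _ hxK).2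
    rcases hxd.lt_or_eq with h | h
    · obtain ⟨ρ, hρ, H⟩ := hbelow x hxD h
      obtain ⟨z, hzU, hz⟩ := Metric.mem_closure_iff.1 hxU ρ hρ
      exact ⟨ρ, hρ, fun y hy hyx => subset_closure
        (H y (hKQ _ hy).1 hyx z hzU (by rwa [dist_comm]))⟩
    · rcases hreg x hxD (by linarith) (by linarith) with ⟨ε, hε, hmin⟩ | ⟨v, hv1, hv2⟩
      · exfalso
        obtain ⟨z, hzU, hz⟩ := Metric.mem_closure_iff.1 hxU ε hε
        have h1 := hUsub z hzU
        have h2 := hmin z h1.1 (by rwa [dist_comm]) (by rintro rfl; linarith)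
        linarith
      · obtain ⟨ρ, hρ, t₀, ht₀, H⟩ := local_step f hf x v hxD hv2 hv1
        obtain ⟨z, hzU, hz⟩ := Metric.mem_closure_iff.1 hxU ρ hρ
        refine ⟨ρ, hρ, fun y hy hyx => ?_⟩
        have key : ∀ t ∈ Set.Ioc 0 t₀, y + t • v ∈ U := by
          intro t ht
          obtain ⟨c, hc, S, hSD, hS, hzS, hyS, hSc⟩ := H y (hKQ _ hy).1 hyx
            ((hKQ _ hy).2.trans h.ge) z (hUsub z hzU).1 (by rwa [dist_comm])
            (by rw [h]; exact (hUsub z hzU).2) t ht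
          exact hUext c (h ▸ hc) S hSD hS hSc z hzS hzU hyS
        have hcont : Filter.Tendsto (fun t : ℝ => y + t • v) (nhdsWithin 0 (Set.Ioi 0)) (nhds y) := by
          have : Continuous fun t : ℝ => y + t • v := by fun_prop
          have := this.tendsto 0
          simp only [zero_smul, add_zero] at this
          exact this.mono_left nhdsWithin_le_nhds
        refine mem_closure_of_tendsto hcont ?_
        filter_upwards [Ioc_mem_nhdsGT ht₀] with t ht using key t ht
  have hsub : K d ⊆ closure U := by
    have hpU : p ∈ U := ⟨f p, hlt, hpK _ le_rfl⟩
    choose! ρ hρ H using hopen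
    set W := ⋃ x ∈ K d ∩ closure U, Metric.ball x (ρ x) with hW
    have hWo : IsOpen W := isOpen_biUnion fun x _ => Metric.isOpen_ball
    have h1 := isPreconnected_iff_subset_of_disjoint.1 (hKconn d) W (closure U)ᶜ hWo
      isClosed_closure.isOpen_compl (by
        intro x hx
        by_cases hxU : x ∈ closure U
        · exact Or.inl (Set.mem_biUnion ⟨hx, hxU⟩ (Metric.mem_ball_self (hρ x ⟨hx, hxU⟩)))
        · exact Or.inr hxU) (by
        rw [Set.eq_empty_iff_forall_notMem]
        rintro y ⟨hy, hyW, hyU⟩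
        obtain ⟨x, hx, hyx⟩ := Set.mem_iUnion₂.1 hyW
        exact hyU (H x hx y hy hyx))
    rcases h1 with h1 | h1
    · intro y hy
      obtain ⟨x, hx, hyx⟩ := Set.mem_iUnion₂.1 (h1 hy)
      exact H x hx y hy hyx
    · exact absurd (subset_closure hpU) (h1 (hpK d hpd))
  have hqU := hsub hqd
  have hqle : f q ≤ d := (hKQ _ hqd).2
  rcases hqle.lt_or_eq with h | h
  · obtain ⟨ρ, hρ, H⟩ := hbelow q hqD h
    obtain ⟨z, hzU, hz⟩ := Metric.mem_closure_iff.1 hqU ρ hρ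
    obtain ⟨c, hc, hqc⟩ := H q hqD (by simpa using hρ) z hzU (by rwa [dist_comm])
    exact absurd (csInf_le hTbdd hqc) (not_le.2 hc)
  · obtain ⟨ε, hε, hmin⟩ := hq
    obtain ⟨z, hzU, hz⟩ := Metric.mem_closure_iff.1 hqU ε hε
    have h1 := hUsub z hzU
    have h2 := hmin z h1.1 (by rwa [dist_comm]) (by rintro rfl; linarith)
    linarith
lemma sphPt_norm (t : ℝ) : ‖sphPt t‖ = 1 := by
  rw [EuclideanSpace.norm_eq]
  simp [sphPt, Fin.sum_univ_two]

lemma sphPt_cont : Continuous sphPt := by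
  unfold sphPt
  refine (ContinuousLinearEquiv.continuous _).comp ?_
  refine continuous_pi fun i => ?_
  fin_cases i
  · exact Real.continuous_cos
  · exact Real.continuous_sin

/-- the unit tangent vector -/
def tanV (t : ℝ) : E2 := (EuclideanSpace.equiv (Fin 2) ℝ).symm ![-Real.sin t, Real.cos t]

lemma sphPt_deriv (t : ℝ) : HasDerivAt sphPt (tanV t) t := by
  unfold sphPt tanV
  have h : HasDerivAt (fun t : ℝ => ![Real.cos t, Real.sin t]) ![-Real.sin t, Real.cos t] t := by
    rw [hasDerivAt_pi]
    intro i
    fin_cases i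
    · exact Real.hasDerivAt_cos t
    · exact Real.hasDerivAt_sin t
  exact ((EuclideanSpace.equiv (Fin 2) ℝ).symm.toContinuousLinearMap.hasFDerivAt).comp_hasDerivAt t h

lemma inner_tan (t : ℝ) : ⟪sphPt t, tanV t⟫ = 0 := by
  simp [sphPt, tanV, PiLp.inner_apply, Fin.sum_univ_two]
  ring

lemma chain (f : E2 → ℝ) (hf : ContDiff ℝ 1 f) (g : ℝ → ℝ) (hfg : ∀ t, f (sphPt t) = g t) (t : ℝ) :
    deriv g t = fderiv ℝ f (sphPt t) (tanV t) := by
  have h := ((hf.differentiable one_ne_zero) (sphPt t)).hasFDerivAt.comp_hasDerivAt t (sphPt_deriv t)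
  have h2 : f ∘ sphPt = g := funext hfg
  rw [h2] at h
  exact h.deriv

/-- local inverse of the angle parametrization -/
lemma angle_local (t₀ : ℝ) (e : E2) (he : ‖e‖ = 1) (hpos : 0 < ⟪e, sphPt t₀⟫) :
    sphPt (t₀ + Real.arcsin ⟪e, tanV t₀⟫) = e := by
  have h1 : e 0 ^ 2 + e 1 ^ 2 = 1 := by
    have := EuclideanSpace.norm_sq_eq e
    rw [he, Fin.sum_univ_two] at this
    simpa using this.symm
  have hs : ⟪e, sphPt t₀⟫ = e 0 * Real.cos t₀ + e 1 * Real.sin t₀ := by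
    simp [sphPt, PiLp.inner_apply, Fin.sum_univ_two]; ring
  have ht : ⟪e, tanV t₀⟫ = - e 0 * Real.sin t₀ + e 1 * Real.cos t₀ := by
    simp [tanV, PiLp.inner_apply, Fin.sum_univ_two]; ring
  set a := ⟪e, sphPt t₀⟫
  set b := ⟪e, tanV t₀⟫
  have hcs := Real.sin_sq_add_cos_sq t₀
  have hab : a ^ 2 + b ^ 2 = 1 := by
    rw [hs, ht]
    linear_combination h1 + (e 0 ^ 2 + e 1 ^ 2) * hcs
  have hb1 : -1 ≤ b := by nlinarith
  have hb2 : b ≤ 1 := by nlinarith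
  have hcos : Real.cos (Real.arcsin b) = a := by
    rw [Real.cos_arcsin, show 1 - b ^ 2 = a ^ 2 by linarith, Real.sqrt_sq hpos.le]
  have hsin := Real.sin_arcsin hb1 hb2
  ext i
  fin_cases i
  · simp only [sphPt, Real.cos_add, hcos, hsin]
    simp
    rw [hs, ht]
    linear_combination e 0 * hcs
  · simp only [sphPt, Real.sin_add, hcos, hsin]
    simp
    rw [hs, ht]
    linear_combination e 1 * hcs

lemma strict_min_g (g : ℝ → ℝ) (hg : Continuous g) (t₀ : ℝ) (h1 : deriv g t₀ = 0)
    (h2 : 0 < deriv (deriv g) t₀) : ∃ ε > 0, ∀ t, |t - t₀| < ε → t ≠ t₀ → g t₀ < g t := by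
  obtain ⟨ε, hε, H⟩ := Metric.eventually_nhds_iff.1
    (eventually_nhdsWithin_sign_eq_of_deriv_pos h2 h1)
  refine ⟨ε, hε, fun t ht hne => ?_⟩
  rcases hne.lt_or_gt with h | h
  · have : StrictAntiOn g (Set.Icc t t₀) := by
      apply strictAntiOn_of_deriv_neg (convex_Icc _ _) hg.continuousOn
      intro x hx
      rw [interior_Icc] at hx
      rw [abs_lt] at ht
      have := H (y := x) (by rw [Real.dist_eq, abs_lt]; constructor <;> linarith [hx.1, hx.2])
      rw [← sign_eq_neg_one_iff, this, sign_eq_neg_one_iff]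
      linarith [hx.2]
    exact this ⟨le_rfl, h.le⟩ ⟨h.le, le_rfl⟩ h
  · have : StrictMonoOn g (Set.Icc t₀ t) := by
      apply strictMonoOn_of_deriv_pos (convex_Icc _ _) hg.continuousOn
      intro x hx
      rw [interior_Icc] at hx
      rw [abs_lt] at ht
      have := H (y := x) (by rw [Real.dist_eq, abs_lt]; constructor <;> linarith [hx.1, hx.2])
      rw [← sign_eq_one_iff, this, sign_eq_one_iff]
      linarith [hx.1]
    exact this ⟨le_rfl, h.le⟩ ⟨h.le, le_rfl⟩ h

lemma node_SLM (f : E2 → ℝ) (hf : ContDiff ℝ 1 f) (g : ℝ → ℝ) (hfg : ∀ t, f (sphPt t) = g t)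
    (t₀ : ℝ) (h1 : deriv g t₀ = 0) (h2 : 0 < deriv (deriv g) t₀)
    (hrad : fderiv ℝ f (sphPt t₀) (sphPt t₀) < 0) : SLM f (sphPt t₀) := by
  set x := sphPt t₀ with hx
  have hgc : Continuous g := by
    have h2 : f ∘ sphPt = g := funext hfg
    rw [← h2]; exact hf.continuous.comp sphPt_cont
  obtain ⟨ε, hε, hmin⟩ := strict_min_g g hgc t₀ h1 h2
  have hxn : ‖x‖ = 1 := sphPt_norm t₀
  have hc : Continuous fun w : E2 × E2 => fderiv ℝ f w.1 w.2 :=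
    ((hf.continuous_fderiv one_ne_zero).comp continuous_fst).clm_apply continuous_snd
  obtain ⟨r₁, hr₁, H1⟩ := Metric.eventually_nhds_iff.1
    (hc.continuousAt (x := (x, x)) |>.eventually (gt_mem_nhds hrad))
  have hc2 : Continuous fun e : E2 => ⟪e, x⟫ := by fun_prop
  obtain ⟨r₂, hr₂, H2⟩ := Metric.eventually_nhds_iff.1
    (hc2.continuousAt (x := x) |>.eventually (lt_mem_nhds (show (0 : ℝ) < ⟪x, x⟫ by
      rw [real_inner_self_eq_norm_sq, hxn]; norm_num)))
  have hc3 : Continuous fun e : E2 => |Real.arcsin ⟪e, tanV t₀⟫| := by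
    have : Continuous fun e : E2 => ⟪e, tanV t₀⟫ := by fun_prop
    exact (Real.continuous_arcsin.comp this).abs
  obtain ⟨r₃, hr₃, H3⟩ := Metric.eventually_nhds_iff.1
    (hc3.continuousAt (x := x) |>.eventually (gt_mem_nhds (show _ < ε by
      beta_reduce; rw [hx, inner_tan]; simpa using hε)))
  set r := min r₁ (min r₂ r₃)
  have hr : 0 < r := lt_min hr₁ (lt_min hr₂ hr₃)
  -- boundary
  have hbd : ∀ e : E2, ‖e‖ = 1 → dist e x < r → e ≠ x → f x < f e := by
    intro e he hex hne
    have ha := angle_local t₀ e he (H2 (hex.trans_le ((min_le_right _ _).trans (min_le_left _ _))))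
    have hb := H3 (hex.trans_le ((min_le_right _ _).trans (min_le_right _ _)))
    rw [← ha, hx, hfg, hfg]
    apply hmin
    · simpa using hb
    · intro h
      rw [h] at ha
      exact hne ha.symm
  refine ⟨min (r / 2) (1 / 2), lt_min (by linarith) (by norm_num), ?_⟩
  intro y hy hyx hne
  have hyn : ‖y‖ ≤ 1 := by simpa using hy
  have hy1 := hyx.trans_le (min_le_left _ _)
  have hy2 := hyx.trans_le (min_le_right _ _)
  have htri : 1 - ‖y‖ ≤ dist y x := by
    rw [dist_comm, dist_eq_norm, ← hxn]; exact norm_sub_norm_le _ _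
  have hy0 : 0 < ‖y‖ := by linarith
  rcases hyn.lt_or_eq with h | h
  swap
  · exact hbd y h (by linarith) hne
  set e := ‖y‖⁻¹ • y with he
  have hen : ‖e‖ = 1 := by rw [he, norm_smul, norm_inv, norm_norm, inv_mul_cancel₀ hy0.ne']
  have hye : ‖y‖ • e = y := by rw [he, smul_smul, mul_inv_cancel₀ hy0.ne', one_smul]
  have hs : ∀ s ∈ Set.Icc ‖y‖ 1, dist (s • e) x < r := by
    intro s hs
    have : dist (s • e) y = s - ‖y‖ := by
      nth_rewrite 1 [← hye]
      rw [dist_eq_norm, ← sub_smul, norm_smul, hen, mul_one, Real.norm_of_nonneg (by linarith [hs.1])]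
    have := dist_triangle (s • e) y x
    linarith [hs.2]
  have hex : dist e x < r := by simpa using hs 1 ⟨hyn, le_rfl⟩
  have hanti := line_anti f hf 0 e (Set.Icc ‖y‖ 1) (convex_Icc _ _) (by
    intro s hs'
    rw [zero_add]
    refine H1 (y := (s • e, e)) ?_
    rw [Prod.dist_eq]
    exact max_lt ((hs s hs').trans_le (min_le_left _ _)) (hex.trans_le (min_le_left _ _)))
  have h5 : f e < f y := by
    have := hanti ⟨le_rfl, hyn⟩ ⟨hyn, le_rfl⟩ h
    simpa [hye] using this
  rcases eq_or_ne e x with h6 | h6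
  · rwa [h6] at h5
  · exact (hbd e hen hex h6).trans h5

lemma arc (g : ℝ → ℝ) (hg' : Continuous (deriv g)) (α β : ℝ) (hαβ : α < β)
    (hα : deriv g α = 0) (hβ : deriv g β = 0) (h2α : 0 < deriv (deriv g) α)
    (h2β : deriv (deriv g) β ≠ 0) (hno : ∀ t ∈ Set.Ioo α β, deriv g t ≠ 0) :
    (∀ t ∈ Set.Ioo α β, 0 < deriv g t) ∧ deriv (deriv g) β < 0 := by
  have hpos : ∀ t ∈ Set.Ioo α β, 0 < deriv g t := by
    have hev := deriv_pos_right_of_sign_deriv (f := g) (x₀ := α)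
      (nhdsWithin_le_nhds (eventually_nhdsWithin_sign_eq_of_deriv_pos h2α hα))
    obtain ⟨s, hs, hsm⟩ := (hev.and (Ioo_mem_nhdsGT hαβ)).exists
    intro t ht
    by_contra hle
    have := isPreconnected_Ioo.intermediate_value ht hsm hg'.continuousOn
      (show (0 : ℝ) ∈ Set.Icc _ _ from ⟨not_lt.1 hle, le_of_lt hs⟩)
    obtain ⟨w, hw, hw0⟩ := this
    exact hno w hw hw0
  refine ⟨hpos, ?_⟩
  by_contra hle
  have h2 : 0 < deriv (deriv g) β := lt_of_le_of_ne (not_lt.1 hle) h2β.symm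
  have hev := deriv_neg_left_of_sign_deriv (f := g) (x₀ := β)
    (nhdsWithin_le_nhds (eventually_nhdsWithin_sign_eq_of_deriv_pos h2 hβ))
  obtain ⟨s, hs, hsm⟩ := (hev.and (Ioo_mem_nhdsLT hαβ)).exists
  linarith [hpos s hsm]

lemma sphPt_surj (x : E2) (hx : ‖x‖ = 1) : ∃ t, x = sphPt t := by
  have h1 : x 0 ^ 2 + x 1 ^ 2 = 1 := by
    have := EuclideanSpace.norm_sq_eq x
    rw [hx, Fin.sum_univ_two] at this
    simpa using this.symm
  have hz : ‖(⟨x 0, x 1⟩ : ℂ)‖ = 1 := by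
    rw [Complex.norm_eq_sqrt_sq_add_sq]; simp [h1]
  have hz0 : (⟨x 0, x 1⟩ : ℂ) ≠ 0 := by
    intro h; rw [h] at hz; simp at hz
  refine ⟨Complex.arg ⟨x 0, x 1⟩, ?_⟩
  ext i
  fin_cases i
  · simp [sphPt, Complex.cos_arg hz0, hz]
  · simp [sphPt, Complex.sin_arg, hz]

lemma edge (f : E2 → ℝ) (hf : ContDiff ℝ 1 f) (g : ℝ → ℝ) (hfg : ∀ t, f (sphPt t) = g t)
    (hg' : Continuous (deriv g)) (hsph : ∀ x : E2, ‖x‖ = 1 → fderiv ℝ f x ≠ 0)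
    (hnode : ∀ t, deriv g t = 0 →
      (deriv (deriv g) t < 0 ∧ 0 < fderiv ℝ f (sphPt t) (sphPt t)) ∨
      (0 < deriv (deriv g) t ∧ fderiv ℝ f (sphPt t) (sphPt t) < 0))
    (α β δ : ℝ) (hαβ : α < β) (hβδ : β < δ) (hα : deriv g α = 0) (hβ : deriv g β = 0)
    (hδ : deriv g δ = 0) (hno1 : ∀ t ∈ Set.Ioo α β, deriv g t ≠ 0)
    (hno2 : ∀ t ∈ Set.Ioo β δ, deriv g t ≠ 0) (h2α : 0 < deriv (deriv g) α) (hne : g α ≠ g δ) :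
    ∃ x ∈ critPts f, f x ∈ Set.Icc (g α) (g β) := by
  by_contra hcon
  push Not at hcon
  have hgc : Continuous g := by
    have h2 : f ∘ sphPt = g := funext hfg
    rw [← h2]; exact hf.continuous.comp sphPt_cont
  have hnd : ∀ t, deriv g t = 0 → deriv (deriv g) t ≠ 0 := fun t ht => by
    rcases hnode t ht with h | h
    · exact h.1.ne
    · exact h.1.ne'
  have hmin : ∀ t, deriv g t = 0 → 0 < deriv (deriv g) t → SLM f (sphPt t) := by
    intro t ht h2
    apply node_SLM f hf g hfg t ht h2
    rcases hnode t ht with h | h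
    · linarith [h.1]
    · exact h.2
  obtain ⟨hp1, h2β⟩ := arc g hg' α β hαβ hα hβ h2α (hnd β hβ) hno1
  have hdn : deriv (fun t => - g t) = fun t => - deriv g t := by
    funext t; simp
  have hddn : ∀ t, deriv (deriv (fun t => - g t)) t = - deriv (deriv g) t := by
    intro t; rw [hdn]; simp
  obtain ⟨hp2, h2δ⟩ := arc (fun t => - g t) (by rw [hdn]; exact hg'.neg) β δ hβδ
    (by rw [hdn]; simp [hβ]) (by rw [hdn]; simp [hδ]) (by rw [hddn]; linarith)
    (by rw [hddn]; simpa using hnd δ hδ) (by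
      intro t ht; rw [hdn]; simpa using hno2 t ht)
  rw [hddn] at h2δ
  have m1 : StrictMonoOn g (Set.Icc α β) :=
    strictMonoOn_of_deriv_pos (convex_Icc _ _) hgc.continuousOn (by rwa [interior_Icc])
  have m2 : StrictAntiOn g (Set.Icc β δ) :=
    strictAntiOn_of_deriv_neg (convex_Icc _ _) hgc.continuousOn (by
      rw [interior_Icc]; intro t ht
      have := hp2 t ht
      rw [hdn] at this
      simpa using this)
  refine core f hf (sphPt α) (sphPt δ) ?_ (sphPt '' Set.Icc α δ)
    (isPreconnected_Icc.image _ sphPt_cont.continuousOn)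
    ⟨α, ⟨le_rfl, by linarith⟩, rfl⟩ ⟨δ, ⟨by linarith, le_rfl⟩, rfl⟩ ?_ (g β) ?_
    (hmin α hα h2α) (hmin δ hδ (by linarith)) ?_
  · intro h
    apply hne
    rw [← hfg, ← hfg, h]
  · rintro _ ⟨t, _, rfl⟩
    simp [sphPt_norm]
  · rintro _ ⟨t, ht, rfl⟩
    rw [hfg]
    rcases le_total t β with h | h
    · exact m1.monotoneOn ⟨ht.1, h⟩ ⟨hαβ.le, le_rfl⟩ h
    · exact m2.antitoneOn ⟨le_rfl, hβδ.le⟩ ⟨h, ht.2⟩ h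
  · intro x hx hx1 hx2
    have hx1' : ‖x‖ ≤ 1 := by simpa using hx
    set G : E2 := gradient f x with hG
    have hGi : ∀ w, fderiv ℝ f x w = ⟪G, w⟫ := fun w => inner_gradient_left.symm
    have hG0 : fderiv ℝ f x ≠ 0 → G ≠ 0 := by
      intro h hG0
      apply h
      ext w
      rw [hGi, hG0]; simp
    rcases hx1'.lt_or_eq with h | h
    · right
      have hfd : fderiv ℝ f x ≠ 0 := by
        intro h0
        refine hcon x ⟨by simpa using h, h0⟩ ⟨?_, hx2⟩
        rwa [hfg] at hx1
      refine ⟨-G, ?_, fun h' => absurd h' h.ne⟩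
      have := hG0 hfd
      rw [hGi, inner_neg_right, real_inner_self_eq_norm_sq]
      have : 0 < ‖G‖ := norm_pos_iff.2 this
      nlinarith
    · have hGne := hG0 (hsph x h)
      have hGp : 0 < ‖G‖ := norm_pos_iff.2 hGne
      have hcs := abs_real_inner_le_norm G x
      rw [h, mul_one, abs_le] at hcs
      rcases hcs.1.lt_or_eq with h1 | h1
      · right
        refine ⟨-(G + ‖G‖ • x), ?_, fun _ => ?_⟩
        · rw [hGi, inner_neg_right, inner_add_right, inner_smul_right, real_inner_self_eq_norm_sq]
          nlinarith
        · rw [inner_neg_left, inner_add_left, real_inner_smul_left, real_inner_self_eq_norm_sq, h]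
          nlinarith
      · left
        have hGx : G = -(‖G‖ • x) := by
          have : ‖G + ‖G‖ • x‖ ^ 2 = 0 := by
            rw [norm_add_sq_real, inner_smul_right, norm_smul, h, ← h1]
            simp
            ring
          have : G + ‖G‖ • x = 0 := by simpa using this
          exact eq_neg_of_add_eq_zero_left this
        obtain ⟨t, rfl⟩ := sphPt_surj x h
        have hd0 : deriv g t = 0 := by
          rw [chain f hf g hfg, hGi, hGx, inner_neg_left, real_inner_smul_left, inner_tan]
          simp
        apply hmin t hd0
        rcases hnode t hd0 with h' | h'
        · have := h'.2
          rw [hGi] at this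
          linarith
        · exact h'.1
/-- the nodes lifted to the real line -/
def Ribbon.lift {n : ℕ} (a : Ribbon n) (k : ℕ) : ℝ :=
  a.θ ⟨k % n, Nat.mod_lt _ a.n_pos⟩ + (k / n : ℕ) * (2 * Real.pi)

lemma Ribbon.lift_mono {n : ℕ} (a : Ribbon n) : StrictMono a.lift := by
  apply strictMono_nat_of_lt_succ
  intro k
  unfold Ribbon.lift
  have hn := a.n_pos
  by_cases h : (k + 1) % n = 0
  · have h1 : (k + 1) / n = k / n + 1 := Nat.succ_div_of_mod_eq_zero h
    have h2 := (a.theta_mem ⟨k % n, Nat.mod_lt _ a.n_pos⟩).2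
    have h3 := (a.theta_mem ⟨(k + 1) % n, Nat.mod_lt _ a.n_pos⟩).1
    rw [h1]
    push_cast
    linarith
  · have h1 : (k + 1) / n = k / n := Nat.succ_div_of_mod_ne_zero h
    have h4 : k % n < (k + 1) % n := by
      have e1 := Nat.div_add_mod k n
      have e2 := Nat.div_add_mod (k + 1) n
      rw [h1] at e2
      omega
    rw [h1]
    have := a.theta_mono (a := ⟨k % n, Nat.mod_lt _ a.n_pos⟩)
      (b := ⟨(k + 1) % n, Nat.mod_lt _ a.n_pos⟩) h4
    linarith

lemma periodic_deriv {g : ℝ → ℝ} {c : ℝ} (h : Function.Periodic g c) :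
    Function.Periodic (deriv g) c := by
  intro x
  rw [← deriv_comp_add_const]
  congr 1
  funext t
  exact h t

lemma Ribbon.crit_lift {n : ℕ} (a : Ribbon n) (t : ℝ) (ht : deriv a.g t = 0) :
    ∃ i : Fin n, ∃ j : ℤ, t = a.θ i + j * (2 * Real.pi) := by
  have hp := periodic_deriv a.periodic_g
  have hm := toIcoMod_mem_Ico Real.two_pi_pos 0 t
  rw [zero_add] at hm
  have he : toIcoMod Real.two_pi_pos 0 t + toIcoDiv Real.two_pi_pos 0 t * (2 * Real.pi) = t := by
    have := toIcoMod_add_toIcoDiv_zsmul Real.two_pi_pos 0 t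
    rwa [zsmul_eq_mul] at this
  have h0 : deriv a.g (toIcoMod Real.two_pi_pos 0 t) = 0 := by
    have h1 := hp.int_mul (toIcoDiv Real.two_pi_pos 0 t) (toIcoMod Real.two_pi_pos 0 t)
    rw [he, ht] at h1
    exact h1.symm
  obtain ⟨i, hi⟩ := a.crit_only _ hm h0
  exact ⟨i, toIcoDiv Real.two_pi_pos 0 t, by rw [← hi, he]⟩

lemma Ribbon.deriv_lift {n : ℕ} (a : Ribbon n) {h : ℝ → ℝ} (hp : Function.Periodic h (2 * Real.pi))
    (k : ℕ) : h (a.lift k) = h (a.θ ⟨k % n, Nat.mod_lt _ a.n_pos⟩) :=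
  hp.nat_mul (k / n) _

lemma Ribbon.no_crit {n : ℕ} (a : Ribbon n) (k : ℕ) :
    ∀ t ∈ Set.Ioo (a.lift k) (a.lift (k + 1)), deriv a.g t ≠ 0 := by
  intro t ht h0
  obtain ⟨i, j, hij⟩ := a.crit_lift t h0
  have hk0 : 0 ≤ a.lift k := by
    have := (a.theta_mem ⟨k % n, Nat.mod_lt _ a.n_pos⟩).1
    have := Real.pi_pos
    unfold Ribbon.lift
    positivity
  have hj : 0 ≤ j := by
    by_contra hj
    have h1 : j ≤ -1 := by omega
    have h2 : (j : ℝ) ≤ -1 := by exact_mod_cast h1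
    have h3 := (a.theta_mem i).2
    have := ht.1
    nlinarith [Real.pi_pos]
  lift j to ℕ using hj
  have hl : t = a.lift (j * n + i) := by
    have e1 : (j * n + (i : ℕ)) % n = i := by
      rw [Nat.mul_add_mod_self_right]; exact Nat.mod_eq_of_lt i.2
    have e2 : (j * n + (i : ℕ)) / n = j := by
      rw [Nat.mul_comm, Nat.mul_add_div a.n_pos, Nat.div_eq_of_lt i.2, Nat.add_zero]
    unfold Ribbon.lift
    simp only [e1, e2, hij]
    simp
  rw [hl] at ht
  have h1 := a.lift_mono.lt_iff_lt.1 ht.1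
  have h2 := a.lift_mono.lt_iff_lt.1 ht.2
  omega

lemma edge_ribbon (n : ℕ) (hn : 4 ≤ n) (a : Ribbon n) (hpos : ∀ i, a.ν i = 1) (f : E2 → ℝ)
    (hf : IsExtension a f) (i : Fin n) :
    ∃ x ∈ critPts f, f x ∈ Set.uIcc (a.g (a.θ i)) (a.g (a.θ (a.next i))) := by
  obtain ⟨hsm, hfg, hsph, hnd⟩ := hf
  have hp := a.periodic_g
  have hp1 := periodic_deriv hp
  have hp2 := periodic_deriv hp1
  have hf1 : ContDiff ℝ 1 f := hsm.of_le (by exact_mod_cast le_top)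
  have hg1 : ContDiff ℝ 1 a.g := a.smooth_g.of_le (by exact_mod_cast le_top)
  have hg' : Continuous (deriv a.g) := hg1.continuous_deriv le_rfl
  have hsph' : ∀ x : E2, ‖x‖ = 1 → fderiv ℝ f x ≠ 0 := fun x hx => hsph x (by simpa using hx)
  have hps : Function.Periodic sphPt (2 * Real.pi) := by
    intro t; simp [sphPt]
  have hnode : ∀ t, deriv a.g t = 0 →
      (deriv (deriv a.g) t < 0 ∧ 0 < fderiv ℝ f (sphPt t) (sphPt t)) ∨
      (0 < deriv (deriv a.g) t ∧ fderiv ℝ f (sphPt t) (sphPt t) < 0) := by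
    intro t ht
    obtain ⟨k, j, rfl⟩ := a.crit_lift t ht
    rw [show deriv (deriv a.g) (a.θ k + j * (2 * Real.pi)) = _ from hp2.int_mul j _,
      show sphPt (a.θ k + j * (2 * Real.pi)) = _ from hps.int_mul j _]
    have h := hnd k
    rw [hpos k, inner_gradient_left] at h
    simp only [Int.cast_one, one_mul] at h
    rcases (a.node_nondeg k).lt_or_gt with h' | h'
    · exact Or.inl ⟨h', h.1 h'⟩
    · exact Or.inr ⟨h', h.2 h'⟩
  have hi : (⟨(i : ℕ) % n, Nat.mod_lt _ a.n_pos⟩ : Fin n) = i := by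
    ext; exact Nat.mod_eq_of_lt i.2
  have hcr : ∀ k, deriv a.g (a.lift k) = 0 := fun k => by
    rw [a.deriv_lift hp1, a.node_crit]
  have e0 : a.g (a.lift i) = a.g (a.θ i) := by rw [a.deriv_lift hp, hi]
  have e1 : a.g (a.lift (i + 1)) = a.g (a.θ (a.next i)) := by rw [a.deriv_lift hp]; rfl
  have hne : a.g (a.lift i) ≠ a.g (a.lift (i + 1 + 1)) := by
    rw [a.deriv_lift hp, a.deriv_lift hp]
    intro h
    have h1 := congrArg Fin.val (a.values_distinct _ _ h)
    simp only at h1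
    have h2 : i.1 ≡ i.1 + 2 [MOD n] := h1
    have h3 : n ∣ i.1 + 2 - i.1 := (Nat.modEq_iff_dvd' (by omega)).1 h2
    rw [Nat.add_sub_cancel_left] at h3
    have := Nat.le_of_dvd (by norm_num) h3
    omega
  have l1 : a.lift i < a.lift (i + 1) := a.lift_mono (by omega)
  have l2 : a.lift (i + 1) < a.lift (i + 1 + 1) := a.lift_mono (by omega)
  rw [← e0, ← e1]
  have hcase : deriv (deriv a.g) (a.lift i) ≠ 0 := by
    rw [a.deriv_lift hp2]; exact a.node_nondeg _
  rcases hcase.lt_or_gt with h | h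
  · have hdn : deriv (fun t => - a.g t) = fun t => - deriv a.g t := by
      funext t; simp
    have hddn : ∀ t, deriv (deriv (fun t => - a.g t)) t = - deriv (deriv a.g) t := by
      intro t; rw [hdn]; simp
    have hfn : ∀ x, fderiv ℝ (fun y => - f y) x = - fderiv ℝ f x := by
      intro x; simp
    obtain ⟨x, hx, hx2⟩ := edge (fun y => - f y) hf1.neg (fun t => - a.g t)
      (fun t => by rw [hfg]) (by rw [hdn]; exact hg'.neg)
      (fun x hx => by rw [hfn]; simpa using hsph' x hx)
      (fun t ht => by
        have ht' : deriv a.g t = 0 := by rw [hdn] at ht; simpa using ht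
        rw [hddn, hfn]
        simp only [neg_apply]
        rcases hnode t ht' with h | h
        · right; constructor <;> linarith [h.1, h.2]
        · left; constructor <;> linarith [h.1, h.2])
      _ _ _ l1 l2 (by rw [hdn]; simp [hcr]) (by rw [hdn]; simp [hcr]) (by rw [hdn]; simp [hcr])
      (fun t ht => by rw [hdn]; simpa using a.no_crit _ t ht)
      (fun t ht => by rw [hdn]; simpa using a.no_crit _ t ht)
      (by rw [hddn]; linarith) (by simpa using hne)
    refine ⟨x, ⟨hx.1, ?_⟩, ?_⟩
    · have := hx.2
      rw [hfn] at this
      simpa using this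
    · apply Set.Icc_subset_uIcc'
      constructor <;> linarith [hx2.1, hx2.2]
  · obtain ⟨x, hx, hx2⟩ := edge f hf1 a.g hfg hg' hsph' hnode _ _ _ l1 l2 (hcr _) (hcr _) (hcr _)
      (a.no_crit _) (a.no_crit _) h hne
    exact ⟨x, hx, Set.Icc_subset_uIcc hx2⟩

lemma main_bound (n : ℕ) (hn : 4 ≤ n) (a : Ribbon n) (hpos : ∀ i, a.ν i = 1) (f : E2 → ℝ)
    (hf : IsExtension a f) : ((clusterNumber a : ℕ) : ℕ∞) ≤ (critPts f).encard := by
  rcases (critPts f).finite_or_infinite with hfin | hinf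
  · have h1 : clusterNumber a ≤ (hfin.toFinset.image f).card := by
      apply Nat.sInf_le
      refine ⟨hfin.toFinset.image f, rfl, fun i => ?_⟩
      obtain ⟨x, hx, hx2⟩ := edge_ribbon n hn a hpos f hf i
      exact ⟨f x, Finset.mem_image_of_mem f (hfin.mem_toFinset.2 hx), hx2⟩
    have h2 := h1.trans Finset.card_image_le
    rw [hfin.encard_eq_coe_toFinset_card]
    exact_mod_cast h2
  · rw [hinf.encard_eq]; exact le_top

/-- If `a` is a ribbon with `n ≥ 4` nodes all of which are positive, then every extension of
`a` has at least `δ(a)` critical points in the open unit disk; that is, `γ(a) ≥ δ(a)`. -/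
theorem stmt_5 (n : ℕ) (hn : 4 ≤ n) (a : Ribbon n) (hpos : ∀ i, a.ν i = 1) :
    (∀ f : E2 → ℝ, IsExtension a f →
      ((clusterNumber a : ℕ) : ℕ∞) ≤ (critPts f).encard) ∧
    ((clusterNumber a : ℕ∞) ≤ gammaR a) := by
  refine ⟨fun f hf => main_bound n hn a hpos f hf, ?_⟩
  refine le_sInf ?_
  rintro k ⟨f, hf, rfl⟩
  exact main_bound n hn a hpos f hf
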